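/- Let V: ℝ → [0,∞) be an Orlicz function, R ∈ (0,∞), and λ: ℝ → ℝ a bounded continuous function. Let α(λ) ∈ (-∞,0) be the unique solution of ∫ V e^{α(λ)V+λ} dx = R ∫ e^{α(λ)V+λ} dx. Then lim_{n→∞} (1/n) log ∫_{B_R^{n,V}} exp( Σ_{i=1}^n λ(x_i) ) d(x_1,…,x_n) = φ_V(α(λ),λ) − α(λ)R. -/

import Mathlib

open MeasureTheory Real Filter Topology ENNReal

noncomputable section

/-- An Orlicz function: convex, symmetric, vanishing only at `0`, nonnegative. -/
def IsOrlicz (V : ℝ → ℝ) : Prop :=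
  ConvexOn ℝ Set.univ V ∧ (∀ x, V (-x) = V x) ∧ V 0 = 0 ∧ (∀ x, x ≠ 0 → 0 < V x) ∧
    (∀ x, 0 ≤ V x)

/-- `φ_V(α, λ) = log ∫ e^{α V(x) + λ(x)} dx`. -/
def phiV (V lam : ℝ → ℝ) (α : ℝ) : ℝ := Real.log (∫ x : ℝ, Real.exp (α * V x + lam x))

/-- The Orlicz ball `B_R^{n,V} = {x ∈ ℝⁿ : ∑ V(x_k) ≤ R n}`. -/
def OrliczBall (V : ℝ → ℝ) (R : ℝ) (n : ℕ) : Set (Fin n → ℝ) :=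
  {x | ∑ i, V (x i) ≤ R * n}

/-!
Tilting `dx` by `α V + λ` gives a probability measure `ν` under which `V` has mean `R`, and
`∫_{B_R^{n,V}} exp (∑ λ(x_i)) dx = Z ^ n * ∫_{S_n ≤ n R} exp (-α S_n) dν^n`, where
`Z = exp (φ_V(α, λ))` and `S_n = ∑ V(x_i)`. The integrand on the right is at most `exp (-α n R)`.
Conversely, it is at least `exp (-α n (R - ε))` on the window `n (R - ε) ≤ S_n ≤ n R`, whose
probability decays at most like `exp (-ε n)`: an arbitrarily small bounded tilt of `ν` moves the
mean of `V` strictly inside `(R - ε, R)`, where the law of large numbers applies.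
-/

lemma tendsto_one_div_mul_log_of_exp_bounds {u : ℕ → ℝ} {L : ℝ}
    (hlow : ∀ ε > 0, ∀ᶠ n : ℕ in atTop, exp (n * (L - ε)) ≤ u n)
    (hup : ∀ᶠ n : ℕ in atTop, u n ≤ exp (n * L)) :
    Tendsto (fun n : ℕ ↦ 1 / (n : ℝ) * log (u n)) atTop (𝓝 L) := by
  refine tendsto_order.2 ⟨fun a ha ↦ ?_, fun b hb ↦ ?_⟩
  · obtain ⟨ε, hε, haε⟩ : ∃ ε > 0, a < L - ε := ⟨(L - a) / 2, by linarith, by linarith⟩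
    filter_upwards [hlow ε hε, eventually_gt_atTop 0] with n hn hn0
    have hn0' : (0 : ℝ) < n := by exact_mod_cast hn0
    have hlog : n * (L - ε) ≤ log (u n) := (le_log_iff_exp_le ((exp_pos _).trans_le hn)).2 hn
    rw [one_div_mul_eq_div, lt_div_iff₀ hn0']
    nlinarith
  · filter_upwards [hlow 1 one_pos, hup, eventually_gt_atTop 0] with n hpos hn hn0
    have hn0' : (0 : ℝ) < n := by exact_mod_cast hn0
    have hlog : log (u n) ≤ n * L := (log_le_iff_le_exp ((exp_pos _).trans_le hpos)).2 hn
    rw [one_div_mul_eq_div, div_lt_iff₀ hn0']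
    nlinarith

section ExponentialBounds

variable {Ω : Type*} {mΩ : MeasurableSpace Ω} {P : Measure Ω} [IsProbabilityMeasure P]
  {X : Ω → ℝ} {t : ℝ}

lemma norm_exp_mul_le_of_le (ht : 0 ≤ t) {x b : ℝ} (hx : x ≤ b) : ‖exp (t * x)‖ ≤ exp (t * b) := by
  rw [norm_of_nonneg (exp_pos _).le]
  gcongr

lemma setIntegral_exp_mul_le (ht : 0 ≤ t) (b : ℝ) :
    ∫ ω in {ω | X ω ≤ b}, exp (t * X ω) ∂P ≤ exp (t * b) :=
  calc ∫ ω in {ω | X ω ≤ b}, exp (t * X ω) ∂P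
      ≤ ‖∫ ω in {ω | X ω ≤ b}, exp (t * X ω) ∂P‖ := le_abs_self _
    _ ≤ exp (t * b) * P.real {ω | X ω ≤ b} :=
        norm_setIntegral_le_of_norm_le_const (measure_lt_top _ _)
          fun _ hω ↦ norm_exp_mul_le_of_le ht hω
    _ ≤ exp (t * b) := mul_le_of_le_one_right (exp_pos _).le measureReal_le_one

lemma measureReal_mul_exp_le_setIntegral_exp_mul (hX : Measurable X) (ht : 0 ≤ t) (a b : ℝ) :
    P.real {ω | a ≤ X ω ∧ X ω ≤ b} * exp (t * a) ≤ ∫ ω in {ω | X ω ≤ b}, exp (t * X ω) ∂P := by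
  have hb : MeasurableSet {ω | X ω ≤ b} := measurableSet_le hX measurable_const
  have hint : IntegrableOn (fun ω ↦ exp (t * X ω)) {ω | X ω ≤ b} P :=
    .of_bound (measure_lt_top _ _) (by fun_prop) _
      ((ae_restrict_iff' hb).2 (ae_of_all _ fun _ hω ↦ norm_exp_mul_le_of_le ht hω))
  have hsub : {ω | a ≤ X ω ∧ X ω ≤ b} ⊆ {ω | X ω ≤ b} := fun _ hω ↦ hω.2
  rw [mul_comm]
  calc exp (t * a) * P.real {ω | a ≤ X ω ∧ X ω ≤ b}
      ≤ ∫ ω in {ω | a ≤ X ω ∧ X ω ≤ b}, exp (t * X ω) ∂P :=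
        setIntegral_ge_of_const_le_real ((measurableSet_le measurable_const hX).inter hb)
          (measure_ne_top _ _) (fun ω hω ↦ by have := hω.1; gcongr) (hint.mono_set hsub)
    _ ≤ ∫ ω in {ω | X ω ≤ b}, exp (t * X ω) ∂P :=
        setIntegral_mono_set hint (ae_of_all _ fun _ ↦ (exp_pos _).le) hsub.eventuallyLE

end ExponentialBounds

section Tilting

variable {E : Type*} {mE : MeasurableSpace E}

lemma pi_tilted_eq_tilted_sum {ι : Type*} [Fintype ι] (μ : Measure E) [SigmaFinite μ]
    [NeZero μ] {F : E → ℝ} (hF : Integrable (fun x ↦ exp (F x)) μ) :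
    Measure.pi (fun _ : ι ↦ μ.tilted F)
      = (Measure.pi fun _ : ι ↦ μ).tilted (fun x ↦ ∑ i, F (x i)) := by
  have := isProbabilityMeasure_tilted hF
  refine Measure.pi_eq fun s hs ↦ ?_
  rw [tilted_apply_eq_ofReal_integral' _ (MeasurableSet.univ_pi hs), Measure.restrict_pi_pi]
  simp_rw [tilted_apply_eq_ofReal_integral' _ (hs _), exp_sum]
  rw [← ENNReal.ofReal_prod_of_nonneg fun i _ ↦ integral_nonneg fun x ↦ by positivity,
    ← integral_fintype_prod_eq_prod, integral_fintype_prod_eq_pow fun x ↦ exp (F x)]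
  simp only [integral_div, Finset.prod_div_distrib, Finset.prod_const, Finset.card_univ]

lemma setIntegral_exp_sum_pi (μ : Measure E) [SigmaFinite μ] [NeZero μ] {V lam : E → ℝ} {α : ℝ}
    (hF : Integrable (fun x ↦ exp (α * V x + lam x)) μ) (n : ℕ) (s : Set (Fin n → E)) :
    ∫ x in s, exp (∑ i, lam (x i)) ∂Measure.pi (fun _ ↦ μ)
      = (∫ x, exp (α * V x + lam x) ∂μ) ^ n *
        ∫ x in s, exp (-α * ∑ i, V (x i))
          ∂Measure.pi (fun _ ↦ μ.tilted fun x ↦ α * V x + lam x) := by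
  have hZ : (∫ x, exp (α * V x + lam x) ∂μ) ^ n ≠ 0 := pow_ne_zero n (integral_exp_pos hF).ne'
  have hprod : ∫ x : Fin n → E, exp (∑ i, (α * V (x i) + lam (x i))) ∂Measure.pi (fun _ ↦ μ)
      = (∫ x, exp (α * V x + lam x) ∂μ) ^ n := by
    simp_rw [exp_sum]
    rw [integral_fintype_prod_eq_pow fun x ↦ exp (α * V x + lam x), Fintype.card_fin]
  rw [pi_tilted_eq_tilted_sum μ hF, setIntegral_tilted, ← integral_const_mul, hprod]
  refine integral_congr_ae (ae_of_all _ fun x ↦ ?_)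
  simp only [smul_eq_mul]
  rw [← mul_assoc, mul_div_cancel₀ _ hZ, ← exp_add, Finset.sum_add_distrib, ← Finset.mul_sum]
  ring_nf

lemma integrable_exp_of_le {μ : Measure E} [IsFiniteMeasure μ] {g : E → ℝ} {c : ℝ}
    (hg : Measurable g) (hgc : ∀ x, g x ≤ c) : Integrable (fun x ↦ exp (g x)) μ :=
  .of_bound (by fun_prop) (exp c) (ae_of_all _ fun x ↦ by
    rw [norm_of_nonneg (exp_pos _).le]
    exact exp_le_exp.2 (hgc x))

lemma tilted_le_smul {μ : Measure E} [IsProbabilityMeasure μ] {g : E → ℝ} {c : ℝ}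
    (hg : Measurable g) (hg0 : ∀ x, 0 ≤ g x) (hgc : ∀ x, g x ≤ c) :
    μ.tilted g ≤ ENNReal.ofReal (exp c) • μ := by
  have hint := integrable_exp_of_le (μ := μ) hg hgc
  have hone : 1 ≤ ∫ x, exp (g x) ∂μ := by
    simpa using integral_mono (integrable_const 1) hint fun x ↦ one_le_exp (hg0 x)
  rw [← withDensity_const, Measure.tilted]
  refine withDensity_mono (ae_of_all _ fun x ↦ ENNReal.ofReal_le_ofReal ?_)
  exact (div_le_self (exp_pos _).le hone).trans (exp_le_exp.2 (hgc x))

lemma pi_tilted_real_le {ι : Type*} [Fintype ι] {ν : Measure E} [IsProbabilityMeasure ν]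
    {g : E → ℝ} {c : ℝ} (hg : Measurable g) (hg0 : ∀ x, 0 ≤ g x) (hgc : ∀ x, g x ≤ c)
    (s : Set (ι → E)) :
    (Measure.pi fun _ ↦ ν.tilted g).real s
      ≤ exp (Fintype.card ι * c) * (Measure.pi fun _ ↦ ν).real s := by
  have hint := integrable_exp_of_le (μ := ν) hg hgc
  have hsum (x : ι → E) : ∑ i, g (x i) ≤ Fintype.card ι * c := by
    simpa using Finset.sum_le_sum fun i (_ : i ∈ Finset.univ) ↦ hgc (x i)
  have hle := tilted_le_smul (μ := Measure.pi fun _ : ι ↦ ν) (by fun_prop)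
    (fun x ↦ Finset.sum_nonneg fun i _ ↦ hg0 (x i)) hsum s
  rw [pi_tilted_eq_tilted_sum ν hint]
  refine (ENNReal.toReal_mono ?_ hle).trans_eq ?_
  · exact ENNReal.mul_ne_top ofReal_ne_top (measure_ne_top _ _)
  · simp [Measure.real, (exp_pos _).le]

end Tilting

section LawOfLargeNumbers

variable {E : Type*} {mE : MeasurableSpace E} {ν : Measure E} [IsProbabilityMeasure ν]
  {f : E → ℝ}

lemma identDistrib_comp_eval_infinitePi (hf : Measurable f) (i : ℕ) :
    ProbabilityTheory.IdentDistrib (fun ω : ℕ → E ↦ f (ω i)) f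
      (Measure.infinitePi fun _ ↦ ν) ν where
  aemeasurable_fst := (hf.comp (measurable_pi_apply i)).aemeasurable
  aemeasurable_snd := hf.aemeasurable
  map_eq := by
    conv_rhs => rw [← Measure.infinitePi_map_eval (fun _ : ℕ ↦ ν) i]
    exact (Measure.map_map hf (measurable_pi_apply i)).symm

lemma strong_law_ae_infinitePi (hf : Measurable f) (hint : Integrable f ν) :
    ∀ᵐ ω ∂Measure.infinitePi fun _ : ℕ ↦ ν,
      Tendsto (fun n : ℕ ↦ (∑ i ∈ Finset.range n, f (ω i)) / n) atTop (𝓝 (∫ x, f x ∂ν)) := by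
  set X : ℕ → (ℕ → E) → ℝ := fun i ω ↦ f (ω i)
  have hident := identDistrib_comp_eval_infinitePi (ν := ν) hf
  have hindep : ProbabilityTheory.iIndepFun X (Measure.infinitePi fun _ ↦ ν) :=
    ProbabilityTheory.iIndepFun_infinitePi fun _ ↦ hf
  rw [← (hident 0).integral_eq]
  exact ProbabilityTheory.strong_law_ae_real X ((hident 0).integrable_iff.2 hint)
    (fun i j hij ↦ hindep.indepFun hij) (fun i ↦ (hident i).trans (hident 0).symm)

lemma infinitePi_map_fin (n : ℕ) :
    (Measure.infinitePi fun _ : ℕ ↦ ν).map (fun ω (i : Fin n) ↦ ω i)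
      = Measure.pi fun _ : Fin n ↦ ν := by
  rw [← Measure.infinitePi_eq_pi]
  exact Measure.map_infinitePi_infinitePi_of_inj Fin.val_injective

lemma tendsto_pi_average_mem (hf : Measurable f) (hint : Integrable f ν) {s : Set ℝ}
    (hs : IsOpen s) (hmean : ∫ x, f x ∂ν ∈ s) :
    Tendsto (fun n : ℕ ↦ (Measure.pi fun _ : Fin n ↦ ν).real {x | (∑ i, f (x i)) / n ∈ s})
      atTop (𝓝 1) := by
  have hmeas (n : ℕ) : MeasurableSet {x : Fin n → E | (∑ i, f (x i)) / n ∈ s} :=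
    (by fun_prop : Measurable fun x : Fin n → E ↦ (∑ i, f (x i)) / n) hs.measurableSet
  have hproj (n : ℕ) : Measurable fun (ω : ℕ → E) (i : Fin n) ↦ ω i := by fun_prop
  have hlim := tendsto_measure_of_ae_tendsto_indicator_of_isFiniteMeasure
    (μ := Measure.infinitePi fun _ : ℕ ↦ ν) atTop .univ (fun n ↦ hproj n (hmeas n)) <| by
      filter_upwards [strong_law_ae_infinitePi hf hint] with ω hω
      filter_upwards [hω.eventually_mem (hs.mem_nhds hmean)] with n hn
      rw [← Fin.sum_univ_eq_sum_range fun i ↦ f (ω i)] at hn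
      exact iff_of_true hn trivial
  rw [measure_univ] at hlim
  refine ((ENNReal.tendsto_toReal one_ne_top).comp hlim).congr fun n ↦ ?_
  rw [← infinitePi_map_fin, map_measureReal_apply (hproj n) (hmeas n)]
  rfl

end LawOfLargeNumbers

section MeanShift

variable {E : Type*} {mE : MeasurableSpace E} {ν : Measure E} {f : E → ℝ}

lemma exp_indicator_log_mul (A : Set E) (f : E → ℝ) {s : ℝ} (hs : -1 < s) (x : E) :
    exp (A.indicator (fun _ ↦ log (1 + s)) x) * f x = f x + s * A.indicator f x := by
  by_cases hx : x ∈ A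
  · simp only [Set.indicator_of_mem hx, exp_log (neg_lt_iff_pos_add'.1 hs)]
    ring
  · simp [hx]

lemma integral_exp_indicator_log_mul {A : Set E} (hA : MeasurableSet A) (hint : Integrable f ν)
    {s : ℝ} (hs : -1 < s) :
    ∫ x, exp (A.indicator (fun _ ↦ log (1 + s)) x) * f x ∂ν
      = ∫ x, f x ∂ν + s * ∫ x in A, f x ∂ν := by
  simp_rw [exp_indicator_log_mul A f hs]
  rw [integral_add hint ((hint.indicator hA).const_mul s), integral_const_mul,
    integral_indicator hA]

lemma integral_tilted_indicator_log [IsFiniteMeasure ν] {A : Set E} (hA : MeasurableSet A)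
    (hint : Integrable f ν) {s : ℝ} (hs : -1 < s) :
    ∫ x, f x ∂ν.tilted (A.indicator fun _ ↦ log (1 + s))
      = (∫ x, f x ∂ν + s * ∫ x in A, f x ∂ν) / (ν.real Set.univ + s * ν.real A) := by
  have hZ := integral_exp_indicator_log_mul hA (integrable_const (μ := ν) (1 : ℝ)) hs
  simp only [mul_one, integral_const, smul_eq_mul, measureReal_restrict_apply_univ] at hZ
  rw [integral_tilted, hZ, ← integral_exp_indicator_log_mul hA hint hs]
  simp_rw [smul_eq_mul, div_mul_eq_mul_div]
  exact integral_div _ _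

lemma integrable_tilted_of_le [IsFiniteMeasure ν] {g : E → ℝ} {c : ℝ} (hg : Measurable g)
    (hgc : ∀ x, g x ≤ c) (hint : Integrable f ν) : Integrable f (ν.tilted g) := by
  rw [integrable_tilted_iff (integrable_exp_of_le hg hgc)]
  refine hint.bdd_mul (c := exp c) (by fun_prop) (ae_of_all _ fun x ↦ ?_)
  rw [norm_of_nonneg (exp_pos _).le]
  exact exp_le_exp.2 (hgc x)

lemma setIntegral_lt_mean_mul_measureReal [IsProbabilityMeasure ν] (hf : Measurable f)
    (hint : Integrable f ν) (hne : ¬ f =ᵐ[ν] fun _ ↦ ∫ y, f y ∂ν) :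
    ∫ x in {x | f x < ∫ y, f y ∂ν}, f x ∂ν
      < (∫ y, f y ∂ν) * ν.real {x | f x < ∫ y, f y ∂ν} := by
  set m := ∫ y, f y ∂ν
  have hA : MeasurableSet {x | f x < m} := measurableSet_lt hf measurable_const
  have hle : ∀ᵐ x ∂ν.restrict {x | f x < m}, f x ≤ m :=
    (ae_restrict_iff' hA).2 (ae_of_all _ fun _ hx ↦ le_of_lt hx)
  have hconst : ∫ _ in {x | f x < m}, m ∂ν = m * ν.real {x | f x < m} := by
    rw [setIntegral_const, smul_eq_mul, mul_comm]
  rw [← hconst]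
  refine (integral_mono_ae hint.integrableOn (integrable_const m) hle).lt_of_ne fun heq ↦ hne ?_
  have hAe := (integral_eq_iff_of_ae_le hint.integrableOn (integrable_const m) hle).1 heq
  have hge : ∀ᵐ x ∂ν, m ≤ f x := by
    filter_upwards [(ae_restrict_iff' hA).1 hAe] with x hx
    exact not_lt.1 fun hlt ↦ hlt.ne (hx hlt)
  exact ((integral_eq_iff_of_ae_le (integrable_const m) hint hge).1 (by simp [m])).symm

lemma exists_tilted_integral_mem_Ioo [IsProbabilityMeasure ν] (hf : Measurable f)
    (hint : Integrable f ν) (hne : ¬ f =ᵐ[ν] fun _ ↦ ∫ y, f y ∂ν) {ε : ℝ} (hε : 0 < ε) :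
    ∃ g : E → ℝ, Measurable g ∧ (∀ x, 0 ≤ g x) ∧ (∀ x, g x ≤ ε) ∧
      ∫ x, f x ∂ν.tilted g ∈ Set.Ioo (∫ x, f x ∂ν - ε) (∫ x, f x ∂ν) := by
  -- Extra weight `1 + s` on `{f < m}` lowers the mean by `s * K / (1 + s * ν A)`.
  set m := ∫ x, f x ∂ν
  set A : Set E := {x | f x < m}
  have hA : MeasurableSet A := measurableSet_lt hf measurable_const
  set K : ℝ := m * ν.real A - ∫ x in A, f x ∂ν
  have hK : 0 < K := sub_pos.2 (setIntegral_lt_mean_mul_measureReal hf hint hne)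
  set s : ℝ := ε / (1 + K)
  have hs : 0 < s := by positivity
  have hsK : s * (1 + K) = ε := div_mul_cancel₀ _ (by positivity)
  have hsA : 0 ≤ s * ν.real A := by positivity
  have hlog : Real.log (1 + s) ≤ ε := by nlinarith [log_le_sub_one_of_pos (by linarith : 0 < 1 + s)]
  refine ⟨A.indicator fun _ ↦ log (1 + s), measurable_const.indicator hA,
    Set.indicator_nonneg fun _ _ ↦ log_nonneg (by linarith),
    Set.indicator_le' (fun _ _ ↦ hlog) fun _ _ ↦ hε.le, ?_⟩
  have hmean : ∫ x, f x ∂ν.tilted (A.indicator fun _ ↦ log (1 + s))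
      = m - s * K / (1 + s * ν.real A) := by
    rw [integral_tilted_indicator_log hA hint (by linarith), probReal_univ]
    field_simp
    ring
  have hshift : s * K / (1 + s * ν.real A) ≤ s * K := div_le_self (by positivity) (by linarith)
  have hshift_pos : 0 < s * K / (1 + s * ν.real A) := by positivity
  rw [hmean]
  constructor <;> linarith

end MeanShift

section SubexponentialWindow

variable {E : Type*} {mE : MeasurableSpace E} {ν : Measure E} [IsProbabilityMeasure ν]
  {f : E → ℝ} {m ε : ℝ}

lemma pi_real_window_eq_one_of_ae_eq (hfm : f =ᵐ[ν] fun _ ↦ m) (hε : 0 ≤ ε) (n : ℕ) :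
    (Measure.pi fun _ : Fin n ↦ ν).real
      {x | n * (m - ε) ≤ ∑ i, f (x i) ∧ ∑ i, f (x i) ≤ n * m} = 1 := by
  have hae : ∀ᵐ x ∂Measure.pi fun _ : Fin n ↦ ν, ∀ i, f (x i) = m :=
    ae_all_iff.2 fun i ↦
      (Measure.quasiMeasurePreserving_eval (fun _ : Fin n ↦ ν) i).ae (p := fun y ↦ f y = m) hfm
  refine (measureReal_congr (eventuallyEq_univ.2 ?_)).trans probReal_univ
  filter_upwards [hae] with x hx
  have hsum : ∑ i, f (x i) = n * m := by simp [hx]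
  exact ⟨hsum ▸ by gcongr; linarith, hsum.le⟩

lemma eventually_exp_neg_le_pi_real_window (hf : Measurable f) (hint : Integrable f ν)
    (hmean : ∫ x, f x ∂ν = m) (hε : 0 < ε) :
    ∀ᶠ n : ℕ in atTop, exp (-(n * ε)) ≤ (Measure.pi fun _ : Fin n ↦ ν).real
      {x | n * (m - ε) ≤ ∑ i, f (x i) ∧ ∑ i, f (x i) ≤ n * m} := by
  by_cases hfm : f =ᵐ[ν] fun _ ↦ m
  · refine .of_forall fun n ↦ ?_
    rw [pi_real_window_eq_one_of_ae_eq hfm hε.le]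
    exact exp_le_one_iff.2 (neg_nonpos.2 (by positivity))
  subst hmean
  obtain ⟨g, hg, hg0, hgε, hshift⟩ := exists_tilted_integral_mem_Ioo hf hint hfm (half_pos hε)
  have := isProbabilityMeasure_tilted (integrable_exp_of_le (μ := ν) hg hgε)
  have hdecay : Tendsto (fun n : ℕ ↦ exp (-(n * (ε / 2)))) atTop (𝓝 0) :=
    tendsto_exp_neg_atTop_nhds_zero.comp
      (tendsto_natCast_atTop_atTop.atTop_mul_const (half_pos hε))
  have hlln := tendsto_pi_average_mem hf (integrable_tilted_of_le hg hgε hint) isOpen_Ioo hshift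
  filter_upwards [hdecay.eventually_lt hlln one_pos, eventually_gt_atTop 0] with n hn hn0
  have hn0' : (0 : ℝ) < n := by exact_mod_cast hn0
  set S : Set (Fin n → E) :=
    {x | (∑ i, f (x i)) / n ∈ Set.Ioo (∫ y, f y ∂ν - ε / 2) (∫ y, f y ∂ν)}
  have htilt : (Measure.pi fun _ : Fin n ↦ ν.tilted g).real S
      ≤ exp (n * (ε / 2)) * (Measure.pi fun _ : Fin n ↦ ν).real S := by
    simpa using pi_tilted_real_le hg hg0 hgε S
  have hS : exp (-(n * ε)) ≤ (Measure.pi fun _ : Fin n ↦ ν).real S := by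
    refine le_of_mul_le_mul_left ?_ (exp_pos (n * (ε / 2)))
    rw [← exp_add]
    convert! hn.le.trans htilt using 2
    ring
  refine hS.trans (measureReal_mono fun x hx ↦ ?_)
  obtain ⟨hlow, hup⟩ := hx
  rw [lt_div_iff₀ hn0'] at hlow
  rw [div_lt_iff₀ hn0'] at hup
  constructor <;> nlinarith

end SubexponentialWindow

lemma integral_tilted_eq_of_integral_mul_exp_eq {E : Type*} {mE : MeasurableSpace E}
    {μ : Measure E} [NeZero μ] {V F : E → ℝ} {R : ℝ} (hF : Integrable (fun x ↦ exp (F x)) μ)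
    (hR : ∫ x, V x * exp (F x) ∂μ = R * ∫ x, exp (F x) ∂μ) :
    ∫ x, V x ∂μ.tilted F = R := by
  rw [integral_tilted]
  simp_rw [smul_eq_mul, div_mul_eq_mul_div, mul_comm (exp _)]
  rw [integral_div, hR, mul_div_cancel_right₀ _ (integral_exp_pos hF).ne']

theorem stmt6_general {E : Type*} {mE : MeasurableSpace E} (μ : Measure E) [SigmaFinite μ]
    [NeZero μ] {V lam : E → ℝ} {α R : ℝ} (hV : Measurable V) (hα : α ≤ 0)
    (hF : Integrable (fun x ↦ exp (α * V x + lam x)) μ)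
    (hVF : Integrable (fun x ↦ V x * exp (α * V x + lam x)) μ)
    (hR : ∫ x, V x * exp (α * V x + lam x) ∂μ = R * ∫ x, exp (α * V x + lam x) ∂μ) :
    Tendsto (fun n : ℕ ↦ 1 / (n : ℝ) * log (∫ x in {x : Fin n → E | ∑ i, V (x i) ≤ R * n},
        exp (∑ i, lam (x i)) ∂Measure.pi fun _ ↦ μ))
      atTop (𝓝 (log (∫ x, exp (α * V x + lam x) ∂μ) - α * R)) := by
  have hZ (n : ℕ) : (∫ x, exp (α * V x + lam x) ∂μ) ^ n
      = exp (n * log (∫ x, exp (α * V x + lam x) ∂μ)) := by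
    rw [exp_nat_mul, exp_log (integral_exp_pos hF)]
  set ν : Measure E := μ.tilted fun x ↦ α * V x + lam x
  have := isProbabilityMeasure_tilted hF
  have hVν : Integrable V ν :=
    (integrable_tilted_iff hF V).2 (hVF.congr (ae_of_all _ fun x ↦ mul_comm _ _))
  have hmean : ∫ x, V x ∂ν = R := integral_tilted_eq_of_integral_mul_exp_eq hF hR
  have ht : 0 ≤ -α := neg_nonneg.2 hα
  simp_rw [setIntegral_exp_sum_pi μ hF, hZ, mul_comm R]
  set φ : ℝ := log (∫ x, exp (α * V x + lam x) ∂μ)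
  refine tendsto_one_div_mul_log_of_exp_bounds (fun δ hδ ↦ ?_) (.of_forall fun n ↦ ?_)
  · set ε : ℝ := δ / (1 - α)
    have hε : 0 < ε := div_pos hδ (by linarith)
    have hεδ : ε * (1 - α) = δ := div_mul_cancel₀ _ (by linarith)
    filter_upwards [eventually_exp_neg_le_pi_real_window hV hVν hmean hε] with n hn
    calc exp (n * (φ - α * R - δ))
        = exp (n * φ) * (exp (-(n * ε)) * exp (-α * (n * (R - ε)))) := by
          rw [← exp_add, ← exp_add, ← hεδ]
          ring_nf
      _ ≤ _ := by
          gcongr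
          exact (mul_le_mul_of_nonneg_right hn (exp_pos _).le).trans
            (measureReal_mul_exp_le_setIntegral_exp_mul (by fun_prop) ht _ _)
  · calc _ ≤ exp (n * φ) * exp (-α * (n * R)) := by
          gcongr
          exact setIntegral_exp_mul_le ht _
      _ = exp (n * (φ - α * R)) := by
          rw [← exp_add]
          ring_nf

lemma integrable_exp_neg_mul_abs {b : ℝ} (hb : 0 < b) : Integrable fun x : ℝ ↦ exp (-b * |x|) := by
  refine .of_integral_ne_zero ?_
  rw [integral_comp_abs (f := fun x ↦ exp (-b * x)), integral_exp_mul_Ioi (neg_neg_of_pos hb)]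
  simp [hb.ne']

namespace IsOrlicz

variable {V : ℝ → ℝ}

lemma continuous (hV : IsOrlicz V) : Continuous V :=
  continuousOn_univ.1 (hV.1.continuousOn isOpen_univ)

lemma apply_abs (hV : IsOrlicz V) (x : ℝ) : V |x| = V x := by
  rcases abs_choice x with h | h <;> rw [h]
  exact hV.2.1 x

lemma mul_abs_sub_one_le (hV : IsOrlicz V) (x : ℝ) : V 1 * (|x| - 1) ≤ V x := by
  have hV1 : 0 < V 1 := hV.2.2.2.1 1 one_ne_zero
  rcases le_or_gt |x| 1 with hx | hx
  · exact (mul_nonpos_of_nonneg_of_nonpos hV1.le (by linarith)).trans (hV.2.2.2.2 x)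
  have hslope := hV.1.secant_mono (a := 0) (x := 1) (y := |x|) trivial trivial trivial
    one_ne_zero (by positivity) hx.le
  rw [hV.apply_abs, hV.2.2.1, sub_zero, sub_zero, sub_zero, sub_zero, div_one,
    le_div_iff₀ (by linarith)] at hslope
  linarith

lemma integrable_exp_mul_add (hV : IsOrlicz V) {β : ℝ} (hβ : β < 0) {lam : ℝ → ℝ}
    (hlam : Measurable lam) {C : ℝ} (hC : ∀ x, lam x ≤ C) :
    Integrable fun x ↦ exp (β * V x + lam x) := by
  have hV1 : 0 < V 1 := hV.2.2.2.1 1 one_ne_zero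
  refine ((integrable_exp_neg_mul_abs (mul_pos (neg_pos.2 hβ) hV1)).const_mul
    (exp (C - β * V 1))).mono' ?_ (ae_of_all _ fun x ↦ ?_)
  · have := hV.continuous.measurable
    fun_prop
  · rw [norm_of_nonneg (exp_pos _).le, ← exp_add, exp_le_exp]
    nlinarith [hV.mul_abs_sub_one_le x, hC x]

end IsOrlicz

/-- `(1/n) log ∫_{B_R^{n,V}} exp(∑ λ(x_i)) dx → φ_V(α(λ),λ) - α(λ) R`. -/
theorem stmt6 (V : ℝ → ℝ) (hV : IsOrlicz V) (R : ℝ) (hR : 0 < R)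
    (lam : ℝ → ℝ) (hlamCont : Continuous lam) (hlamBdd : ∃ C : ℝ, ∀ x, |lam x| ≤ C)
    (α : ℝ) (hα : α < 0)
    (hαeq : (∫ x : ℝ, V x * Real.exp (α * V x + lam x))
        = R * ∫ x : ℝ, Real.exp (α * V x + lam x)) :
    Tendsto (fun n : ℕ =>
        (1 / (n : ℝ)) * Real.log (∫ x in OrliczBall V R n, Real.exp (∑ i, lam (x i))))
      atTop (nhds (phiV V lam α - α * R)) := by
  obtain ⟨C, hC⟩ := hlamBdd
  have hF := hV.integrable_exp_mul_add hα hlamCont.measurable fun x ↦ (abs_le.1 (hC x)).2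
  exact stmt6_general volume hV.continuous.measurable hα.le hF (.of_integral_ne_zero <|
    hαeq.trans_ne (mul_pos hR (integral_exp_pos hF)).ne') hαeq
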